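/- arXiv:2408.07411 — 2 statements merged into one kernel-verified Lean document; each statement's English description precedes it below -/
import Mathlib

section
/- Let Γ be a finite Abelian group in the class 𝒢. Suppose that either there exist (not necessarily distinct) odd primes p and q such that p·q divides the odd part of |Γ|, or exp(Γ) < |Γ|/2. Then there exist a positive integer m with 1 < m < |Γ|, a complete mapping φ of Γ, and a partition S_1, S_2, …, S_t of the elements of Γ such that |S_i| = m, ∑_{s∈S_i} s = 0 and ∑_{s∈S_i} φ(s) = 0 for every i with 1 ≤ i ≤ t. -/
/-!
The key is an extension step. Let `H` be a nontrivial proper subgroup of `Γ` such that both `H` and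
`Γ ⧸ H` have complete mappings `θ`, `ψ`. The existence of `ψ` forces the elements of `Γ ⧸ H` to sum
to zero, so there is a transversal `s` with sum zero. For every coset `x` choose permutations `f x`,
`g x` of `H` whose sum is again a permutation, in such a way that `∑ x, f x = 0 = ∑ x, g x`: starting
from `(id, θ)`, opposite pairs do this for an even number of cosets, and one extra triple
`(id, θ)`, `(θ, -(id + θ))`, `(-(id + θ), id)` corrects the parity (`exists_goodPairs`). Then
`s x + f x h ↦ s (ψ x) + g x h` is a complete mapping of `Γ`, and the sets `{s x + f x h | x}`,
`h ∈ H`, form a partition of the required kind with blocks of size `|Γ ⧸ H|`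
(`partition_of_subgroup`).

It remains to see which groups of the class are not extensions of two smaller groups of the class
(`structure_class`). If an odd prime divides the order, a subgroup of that order works unless it is
everything. For a noncyclic `2`-group, take a cyclic subgroup `⟨g⟩` of largest order, its involution
`z`, and an involution `v ∉ ⟨g⟩`. If `⟨g⟩` has index two, the group is `⟨g⟩ ⊕ ⟨v⟩`. Otherwise
`⟨z, v⟩` has a noncyclic quotient, unless the group is elementary of order eight. The groups
`⟨g⟩ ⊕ ⟨v⟩` have an explicit complete mapping, and the elementary group of order eight carries a
partition coming from multiplication in the field with eight elements. Induction on the order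
provides complete mappings for the whole class, and the extension step gives the partition, since
the hypothesis on `Γ` excludes prime order and the groups `⟨g⟩ ⊕ ⟨v⟩`.
-/

/-- `Γ` belongs to the class `𝒢`: its order is odd or it has more than one involution. -/
def InClassG (Γ : Type*) [AddCommGroup Γ] [Fintype Γ] : Prop :=
  Odd (Fintype.card Γ) ∨ 1 < Nat.card {g : Γ // g ≠ 0 ∧ g + g = 0}

/-- There exist a complete mapping `φ` of `Γ` and a partition of `Γ` into sets of size `m`,
each of which is zero-sum and whose image under `φ` is zero-sum. -/
def HasZeroSumCMPartition (Γ : Type*) [AddCommGroup Γ] [Fintype Γ] (m : ℕ) : Prop :=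
  ∃ (φ : Γ → Γ) (t : ℕ) (S : Fin t → Finset Γ),
    Function.Bijective φ ∧
    Function.Bijective (fun x : Γ => x + φ x) ∧
    (∀ g : Γ, ∃! i, g ∈ S i) ∧
    (∀ i, (S i).card = m) ∧
    (∀ i, ∑ s ∈ S i, s = 0) ∧
    (∀ i, ∑ s ∈ S i, φ s = 0)

/-! ### Complete mappings and good pairs -/

/-- A complete mapping: both `φ` and `x ↦ x + φ x` are bijections. -/
def IsCM {G : Type*} [AddCommGroup G] (φ : G → G) : Prop :=
  Function.Bijective φ ∧ Function.Bijective (fun x => x + φ x)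

/-- `G` has a complete mapping. -/
def HasCM (G : Type*) [AddCommGroup G] : Prop := ∃ φ : G → G, IsCM φ

/-- Summing `x + φ x` over the group gives `Σ = 2 Σ`, where `Σ` is the sum of all elements. -/
theorem HasCM.sum_eq_zero {G : Type*} [AddCommGroup G] [Fintype G] (h : HasCM G) :
    ∑ x : G, x = 0 := by
  obtain ⟨φ, h1, h2⟩ := h
  have e1 : ∑ x : G, φ x = ∑ x : G, x := h1.sum_comp (fun x => x)
  have e2 : ∑ x : G, (x + φ x) = ∑ x : G, x := h2.sum_comp (fun x => x)
  rw [Finset.sum_add_distrib, e1] at e2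
  simpa using e2

/-- Doubling is injective on a group of odd order, so the identity is a complete mapping. -/
theorem hasCM_of_odd {G : Type*} [AddCommGroup G] [Finite G] (h : Odd (Nat.card G)) :
    HasCM G := by
  refine ⟨id, Function.bijective_id, ?_⟩
  have := (Nat.Coprime.nsmul_right_bijective (G := G) (n := 2)
    (Nat.coprime_two_right.mpr h))
  simpa [two_nsmul] using this

/-- A pair of permutations `(f, g)` of `G` whose pointwise sum is again a permutation, i.e. a
complete mapping `g ∘ f⁻¹` reparametrised by `f`. -/
def GoodPair {G : Type*} [AddCommGroup G] (c : (G → G) × (G → G)) : Prop :=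
  Function.Bijective c.1 ∧ Function.Bijective c.2 ∧ Function.Bijective (c.1 + c.2)

theorem GoodPair.neg {G : Type*} [AddCommGroup G] {c : (G → G) × (G → G)} (h : GoodPair c) :
    GoodPair (-c) := by
  obtain ⟨h1, h2, h3⟩ := h
  have hn : Function.Bijective (fun x : G => -x) := (Equiv.neg G).bijective
  refine ⟨hn.comp h1, hn.comp h2, ?_⟩
  have := hn.comp h3
  convert this using 1
  funext x
  simp [add_comm]

/-- At least two good pairs with total sum zero, in any prescribed number: pairs of opposite good
pairs, together with, for an odd number, the three cyclically consecutive pairs of the functions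
`x`, `θ x`, `-(x + θ x)`, where `θ` is a complete mapping. -/
theorem exists_goodPairs {G : Type*} [AddCommGroup G] (h : HasCM G) (n : ℕ) :
    ∃ F : Fin (n + 2) → (G → G) × (G → G), (∀ i, GoodPair (F i)) ∧ ∑ i, F i = 0 := by
  obtain ⟨θ, h1, h2⟩ := h
  have hn : Function.Bijective (fun x : G => -x) := (Equiv.neg G).bijective
  have h3 : Function.Bijective (fun x => -(x + θ x)) := hn.comp h2
  have g0 : GoodPair ((id, θ) : (G → G) × (G → G)) := ⟨Function.bijective_id, h1, h2⟩
  induction n using Nat.twoStepInduction with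
  | zero =>
    refine ⟨![(id, θ), -(id, θ)], ?_, ?_⟩
    · intro i
      fin_cases i
      · exact g0
      · exact g0.neg
    · rw [Fin.sum_univ_two]
      exact add_neg_cancel _
  | one =>
    refine ⟨![(id, θ), (θ, fun x => -(x + θ x)), (fun x => -(x + θ x), id)], ?_, ?_⟩
    · intro i
      fin_cases i
      · exact g0
      · refine ⟨h1, h3, ?_⟩
        convert hn using 1
        funext x
        simp
      · refine ⟨h3, Function.bijective_id, ?_⟩
        convert hn.comp h1 using 1
        funext x
        simp
    · rw [Fin.sum_univ_three]
      ext x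
      · simp
      · simp
  | more n ih _ =>
    obtain ⟨F, hF, hs⟩ := ih
    refine ⟨Fin.cons (id, θ) (Fin.cons (-(id, θ)) F), ?_, ?_⟩
    · intro i
      refine Fin.cases ?_ (fun i => ?_) i
      · exact g0
      · refine Fin.cases ?_ (fun i => ?_) i
        · exact g0.neg
        · exact hF i
    · rw [Fin.sum_univ_succ, Fin.sum_univ_succ]
      simp only [Fin.cons_zero, Fin.cons_succ, hs]
      simp

/-! ### Extensions -/

/-- A lift of a permutation of `G ⧸ H`, together with a permutation of `H` over each point,
parametrises `G`. -/
theorem bijective_lift_add {G : Type*} [AddCommGroup G] [Finite G] (H : AddSubgroup G)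
    (r : G ⧸ H → G) (hr : Function.Bijective (fun x => (r x : G ⧸ H)))
    (F : G ⧸ H → H → H) (hF : ∀ x, Function.Bijective (F x)) :
    Function.Bijective (fun p : (G ⧸ H) × H => r p.1 + (F p.1 p.2 : G)) := by
  refine Function.Injective.bijective_of_nat_card_le ?_ ?_
  · rintro ⟨x, a⟩ ⟨y, b⟩ hab
    have e : (r x : G ⧸ H) = (r y : G ⧸ H) := by
      have := congrArg (fun z : G => (z : G ⧸ H)) hab
      simpa [(QuotientAddGroup.eq_zero_iff _).2 (F x a).2,
        (QuotientAddGroup.eq_zero_iff _).2 (F y b).2] using this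
    obtain rfl : x = y := hr.1 e
    have := add_left_cancel hab
    exact Prod.ext rfl ((hF x).1 (Subtype.ext this))
  · rw [Nat.card_prod, ← AddSubgroup.card_eq_card_quotient_mul_card_addSubgroup]

/-- Extension step. With a transversal `s` of sum zero and good pairs `(f x, g x)` of sum zero, the
blocks `S h = {s x + f x h | x ∈ G ⧸ H}` are zero-sum, and so are their images under
`s x + f x h ↦ s (ψ x) + g x h`, where `ψ` is a complete mapping of `G ⧸ H`. -/
theorem partition_of_subgroup {G : Type*} [AddCommGroup G] [Fintype G] (H : AddSubgroup G)
    (htop : H ≠ ⊤) (hH : HasCM H) (hK : HasCM (G ⧸ H)) :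
    HasZeroSumCMPartition G (Nat.card (G ⧸ H)) := by
  classical
  have : Fintype (G ⧸ H) := Fintype.ofFinite _
  have : Fintype H := Fintype.ofFinite _
  have hsumK := hK.sum_eq_zero
  obtain ⟨ψ, hψ1, hψ2⟩ := hK
  -- A transversal of sum zero: correct an arbitrary one at the trivial coset.
  obtain ⟨s, hs, hs0⟩ : ∃ s : G ⧸ H → G, (∀ x, (s x : G ⧸ H) = x) ∧ ∑ x, s x = 0 := by
    let c : G := ∑ x : G ⧸ H, x.out
    have hc : (c : G ⧸ H) = 0 := by
      have : (c : G ⧸ H) = ∑ x : G ⧸ H, ((x.out : G) : G ⧸ H) :=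
        map_sum (QuotientAddGroup.mk' H) _ _
      simpa [hsumK] using this
    refine ⟨fun x => x.out - if x = 0 then c else 0, fun x => ?_, ?_⟩
    · by_cases hx : x = 0 <;> simp [hx, hc]
    · simp [Finset.sum_sub_distrib, c]
  obtain ⟨n, hn⟩ : ∃ n, Fintype.card (G ⧸ H) = n + 2 := by
    refine ⟨Fintype.card (G ⧸ H) - 2, ?_⟩
    have : Nontrivial (G ⧸ H) := QuotientAddGroup.nontrivial_iff.2 htop
    have := Fintype.one_lt_card (α := G ⧸ H)
    omega
  obtain ⟨F, hF, hFs⟩ := exists_goodPairs hH n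
  let e : G ⧸ H ≃ Fin (n + 2) := Fintype.equivFinOfCardEq hn
  have hsum : ∑ x, F (e x) = 0 := by rw [← hFs]; exact e.sum_comp F
  let f : G ⧸ H → H → H := fun x => (F (e x)).1
  let g : G ⧸ H → H → H := fun x => (F (e x)).2
  have hfs (h : H) : ∑ x, ((f x h : H) : G) = 0 := by
    have h1 := congrArg (fun c => c.1 h) hsum
    simp only [Prod.fst_sum, Finset.sum_apply] at h1
    have := congrArg (fun c : H => (c : G)) h1
    simpa using this
  have hgs (h : H) : ∑ x, ((g x h : H) : G) = 0 := by
    have h1 := congrArg (fun c => c.2 h) hsum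
    simp only [Prod.snd_sum, Finset.sum_apply] at h1
    have := congrArg (fun c : H => (c : G)) h1
    simpa using this
  let E : (G ⧸ H) × H ≃ G := Equiv.ofBijective _
    (bijective_lift_add H s (by simp [hs]) f (fun x => (hF (e x)).1))
  have hE' := bijective_lift_add H (s ∘ ψ) (by simpa [hs] using hψ1) g (fun x => (hF (e x)).2.1)
  have hE'' := bijective_lift_add H (fun x => s x + s (ψ x)) (by simpa [hs] using hψ2)
    (fun x => f x + g x) (fun x => (hF (e x)).2.2)
  have hEa (p) : E p = s p.1 + (f p.1 p.2 : G) := rfl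
  -- In the coordinates `E`, the map sends `s x + f x h` to `s (ψ x) + g x h`.
  let φ : G → G := fun y => s (ψ (E.symm y).1) + (g (E.symm y).1 (E.symm y).2 : G)
  have hφ (p) : φ (E p) = s (ψ p.1) + (g p.1 p.2 : G) := by simp [φ]
  let j : Fin (Fintype.card H) ≃ H := (Fintype.equivFin H).symm
  have hinj (i) : Function.Injective (fun x => E (x, j i)) := fun x y hxy => by simpa using hxy
  refine ⟨φ, Fintype.card H, fun i => Finset.univ.image (fun x => E (x, j i)), ?_, ?_, ?_, ?_, ?_, ?_⟩
  · exact hE'.comp E.symm.bijective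
  · convert hE''.comp E.symm.bijective using 1
    funext y
    have hy := hEa (E.symm y)
    rw [Equiv.apply_symm_apply] at hy
    simp only [Function.comp, Pi.add_apply, AddSubgroup.coe_add, φ]
    nth_rw 1 [hy]
    abel
  · intro y
    obtain ⟨⟨x, h⟩, rfl⟩ := E.surjective y
    refine ⟨j.symm h, by simp, ?_⟩
    intro i hi
    obtain ⟨x', hx'⟩ : ∃ x', E (x', j i) = E (x, h) := by simpa using hi
    rw [← (Prod.mk.inj (E.injective hx')).2, Equiv.symm_apply_apply]
  · intro i
    rw [Finset.card_image_of_injective _ (hinj i), Finset.card_univ, Nat.card_eq_fintype_card]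
  · intro i
    rw [Finset.sum_image (hinj i).injOn]
    simp only [hEa]
    rw [Finset.sum_add_distrib, hs0, hfs, add_zero]
  · intro i
    rw [Finset.sum_image (hinj i).injOn]
    simp only [hφ]
    rw [Finset.sum_add_distrib, hgs, add_zero, hψ1.sum_comp s, hs0]

/-! ### The elementary group of order eight -/

theorem HasZeroSumCMPartition.hasCM {G : Type*} [AddCommGroup G] [Fintype G] {m : ℕ}
    (h : HasZeroSumCMPartition G m) : HasCM G := by
  obtain ⟨φ, -, -, h1, h2, -⟩ := h
  exact ⟨φ, h1, h2⟩

theorem HasZeroSumCMPartition.of_addEquiv {G G' : Type*} [AddCommGroup G] [Fintype G]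
    [AddCommGroup G'] [Fintype G'] (e : G ≃+ G') {m : ℕ} (h : HasZeroSumCMPartition G m) :
    HasZeroSumCMPartition G' m := by
  obtain ⟨φ, t, S, h1, h2, h3, h4, h5, h6⟩ := h
  refine ⟨fun y => e (φ (e.symm y)), t, fun i => (S i).map e.toEquiv.toEmbedding, ?_, ?_, ?_, ?_,
    ?_, ?_⟩
  · exact e.bijective.comp (h1.comp e.symm.bijective)
  · convert e.bijective.comp (h2.comp e.symm.bijective) using 1
    funext y
    simp
  · intro y
    convert h3 (e.symm y) using 2 with i
    simp [Finset.mem_map_equiv]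
  · simpa using h4
  · intro i
    have := map_sum e (fun x => x) (S i)
    simp [Finset.sum_map, ← this, h5]
  · intro i
    simp [Finset.sum_map, ← map_sum, h6]

/-- Multiplication by a root of `X ^ 3 + X + 1` on the field with eight elements is a complete
mapping, and being linear it preserves the zero-sum property of both blocks. -/
theorem partition_zmod2_cube : HasZeroSumCMPartition (Fin 3 → ZMod 2) 4 := by
  refine ⟨fun v => ![v 2, v 0 + v 2, v 1], 2, fun i => Finset.univ.filter (fun v : Fin 3 → ZMod 2 => v 0 = (i : ℕ)),
    ?_, ?_, ?_, ?_, ?_, ?_⟩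
  · decide +kernel
  · decide +kernel
  · change ∀ g : Fin 3 → ZMod 2, ∃ i : Fin 2,
      g ∈ Finset.univ.filter (fun v : Fin 3 → ZMod 2 => v 0 = (i : ℕ)) ∧
      ∀ j : Fin 2, g ∈ Finset.univ.filter (fun v : Fin 3 → ZMod 2 => v 0 = (j : ℕ)) → j = i
    decide +kernel
  · decide +kernel
  · decide +kernel
  · decide +kernel

theorem partition_of_card_eight {G : Type*} [AddCommGroup G] [Fintype G] (hc : Nat.card G = 8)
    (h2 : ∀ x : G, x + x = 0) : HasZeroSumCMPartition G 4 := by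
  let _ : Module (ZMod 2) G := AddCommGroup.zmodModule (n := 2) (by simpa [two_nsmul] using h2)
  have hr : Module.finrank (ZMod 2) G = 3 := by
    have := Module.natCard_eq_pow_finrank (K := ZMod 2) (V := G)
    rw [hc, Nat.card_zmod] at this
    exact (Nat.pow_right_injective le_rfl (this.symm.trans (by norm_num : 8 = 2 ^ 3)))
  exact partition_zmod2_cube.of_addEquiv
    (Module.finBasisOfFinrankEq (ZMod 2) G hr).equivFun.symm.toAddEquiv

/-! ### Direct sums of a cyclic group and a group of order two -/

/-- Odd order or at least two involutions: the class `𝒢` without reference to a `Fintype`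
instance, hence convenient for subgroups and quotients. -/
def OddOrTwoInv (G : Type*) [AddCommGroup G] : Prop :=
  Odd (Nat.card G) ∨ ∃ u v : G, u ≠ 0 ∧ v ≠ 0 ∧ u ≠ v ∧ u + u = 0 ∧ v + v = 0

theorem InClassG.oddOrTwoInv {G : Type*} [AddCommGroup G] [Fintype G] (h : InClassG G) :
    OddOrTwoInv G := by
  rcases h with h | h
  · exact Or.inl (by simpa using h)
  · have := Finite.one_lt_card_iff_nontrivial.1 h
    obtain ⟨⟨u, hu, hu'⟩, ⟨v, hv, hv'⟩, huv⟩ := exists_pair_ne {g : G // g ≠ 0 ∧ g + g = 0}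
    exact Or.inr ⟨u, v, hu, hv, fun h => huv (Subtype.ext h), hu', hv'⟩

/-- `G` is an internal direct sum `⟨g⟩ ⊕ ⟨v⟩` with `v` an involution and `g` of even order. -/
def IsSplit (G : Type*) [AddCommGroup G] (g v : G) : Prop :=
  Even (addOrderOf g) ∧ 2 * addOrderOf g = Nat.card G ∧
    v ∉ AddSubgroup.zmultiples g ∧ v + v = 0

/-- On `ZMod (2 * n) × ZMod 2`, let `α x` indicate `x ≥ n`, so that `α (x + n) = α x + 1`. Then
`(x, 0) ↦ (x, α x)`, `(x, 1) ↦ (x + 1, 1 + α (x + 1))` is a complete mapping: the sums have first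
coordinate `2 x` and `2 x + 1` respectively, and `α` separates `x` from `x + n`. -/
theorem hasCM_zmod_prod (n : ℕ) (hn : 0 < n) : HasCM (ZMod (2 * n) × ZMod 2) := by
  have : NeZero (2 * n) := ⟨by omega⟩
  have : NeZero n := ⟨by omega⟩
  let α : ZMod (2 * n) → ZMod 2 := fun x => if x.val < n then 0 else 1
  have hval : ((n : ℕ) : ZMod (2 * n)).val = n := by
    rw [ZMod.val_natCast, Nat.mod_eq_of_lt (by omega)]
  have hα (x : ZMod (2 * n)) : α (x + (n : ℕ)) ≠ α x := by
    have hx := x.val_lt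
    by_cases h : x.val < n
    · have h1 : (x + (n : ℕ)).val = x.val + n := by
        rw [ZMod.val_add, hval, Nat.mod_eq_of_lt (by omega)]
      have h2 : ¬ x.val + n < n := by omega
      simp [α, h1, h]
    · have h1 : (x + (n : ℕ)).val = x.val - n := by
        rw [ZMod.val_add, hval, Nat.mod_eq_sub_mod (by omega), Nat.mod_eq_of_lt (by omega)]
        omega
      have h2 : x.val - n < n := by omega
      simp [α, h1, h, h2]
  have hdbl (d : ZMod (2 * n)) (hd : d + d = 0) : d = 0 ∨ d = (n : ℕ) := by
    have hx := d.val_lt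
    have h1 := congrArg ZMod.val hd
    rw [ZMod.val_add, ZMod.val_zero] at h1
    obtain ⟨c, hc⟩ := Nat.dvd_of_mod_eq_zero h1
    have hcn : d.val = n * c := by linarith
    have hc2 : c < 2 := by
      by_contra! h2
      have := Nat.mul_le_mul_left n h2
      omega
    interval_cases c
    · left; exact (ZMod.val_eq_zero d).1 (by simpa using hcn)
    · right; apply ZMod.val_injective; rw [hval]; simpa using hcn
  -- `α` separates the two solutions of `2 x = c`.
  have hsep (x y : ZMod (2 * n)) (hxy : x + x = y + y) (hαxy : α x = α y) : x = y := by
    rcases hdbl (x - y) (by rw [sub_add_sub_comm, hxy, sub_self]) with h | h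
    · exact sub_eq_zero.1 h
    · exfalso
      apply hα y
      rw [← h, add_sub_cancel, hαxy]
  have hpar (x y : ZMod (2 * n)) : x + x ≠ y + (y + 1) := by
    intro h
    have h1 := congrArg (ZMod.castHom (dvd_mul_right 2 n) (ZMod 2)) h
    simp only [map_add, map_one] at h1
    rw [← add_assoc, CharTwo.add_self_eq_zero, CharTwo.add_self_eq_zero, zero_add] at h1
    exact zero_ne_one h1
  have h01 (b : ZMod 2) : b = 0 ∨ b = 1 := by revert b; decide
  refine ⟨fun p => if p.2 = 0 then (p.1, α p.1) else (p.1 + 1, 1 + α (p.1 + 1)),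
    Function.Injective.bijective_of_finite ?_, Function.Injective.bijective_of_finite ?_⟩
  · rintro ⟨x, a⟩ ⟨y, b⟩ h
    rcases h01 a with rfl | rfl <;> rcases h01 b with rfl | rfl <;>
      simp only [if_true, one_ne_zero, if_false, Prod.mk.injEq] at h
    · rw [h.1]
    · obtain ⟨rfl, h⟩ := h
      simp at h
    · obtain ⟨rfl, h⟩ := h
      simp at h
    · rw [add_right_cancel h.1]
  · rintro ⟨x, a⟩ ⟨y, b⟩ h
    rcases h01 a with rfl | rfl <;> rcases h01 b with rfl | rfl <;>
      simp only [if_true, one_ne_zero, if_false, Prod.mk.injEq, Prod.mk_add_mk] at h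
    · rw [hsep x y h.1 (by simpa using h.2)]
    · exact absurd h.1 (hpar _ _)
    · exact absurd h.1.symm (hpar _ _)
    · have := hsep (x + 1) (y + 1) (by linear_combination h.1) (by simpa using h.2)
      rw [add_right_cancel this]

theorem HasCM.of_addEquiv {G G' : Type*} [AddCommGroup G] [AddCommGroup G'] (e : G ≃+ G')
    (h : HasCM G) : HasCM G' := by
  obtain ⟨φ, h1, h2⟩ := h
  refine ⟨fun y => e (φ (e.symm y)), e.bijective.comp (h1.comp e.symm.bijective), ?_⟩
  convert e.bijective.comp (h2.comp e.symm.bijective) using 1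
  funext y
  simp

theorem hasCM_of_isSplit {G : Type*} [AddCommGroup G] [Finite G] {g v : G} (h : IsSplit G g v) :
    HasCM G := by
  obtain ⟨⟨n, hn⟩, hcard, hv, hv2⟩ := h
  rw [← two_mul] at hn
  have hn0 : 0 < n := by
    have := addOrderOf_pos g
    omega
  have : NeZero (2 * n) := ⟨by omega⟩
  let F : ZMod (2 * n) × ZMod 2 →+ G :=
    (ZMod.lift (2 * n) ⟨zmultiplesHom G g, by
      simp only [zmultiplesHom_apply, natCast_zsmul]
      rw [← hn, addOrderOf_nsmul_eq_zero]⟩).coprod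
    (ZMod.lift 2 ⟨zmultiplesHom G v, by
      simpa [two_zsmul] using hv2⟩)
  have hF (i j : ℤ) : F (i, j) = i • g + j • v := by
    simp [F, AddMonoidHom.coprod_apply]
  have hinj : Function.Injective F := by
    rw [injective_iff_map_eq_zero]
    rintro ⟨a, b⟩ hab
    obtain ⟨i, rfl⟩ := ZMod.intCast_surjective a
    have h01 : b = 0 ∨ b = 1 := by clear hab; revert b; decide
    rcases h01 with rfl | rfl
    · have h1 := hF i 0
      rw [Int.cast_zero, hab, zero_smul, add_zero] at h1
      have h2 := addOrderOf_dvd_iff_zsmul_eq_zero.2 h1.symm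
      rw [hn] at h2
      rw [(ZMod.intCast_zmod_eq_zero_iff_dvd i (2 * n)).2 h2]
      rfl
    · have h1 := hF i 1
      rw [Int.cast_one, hab, one_smul] at h1
      refine absurd (AddSubgroup.mem_zmultiples_iff.2 ⟨-i, ?_⟩) hv
      rw [neg_smul]
      exact neg_eq_of_add_eq_zero_right h1.symm
  have hbij : Function.Bijective F := hinj.bijective_of_nat_card_le (by
    rw [Nat.card_prod, Nat.card_zmod, Nat.card_zmod, ← hcard, hn, mul_comm])
  exact (hasCM_zmod_prod n hn0).of_addEquiv (AddEquiv.ofBijective F hbij)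

/-! ### Structure of the class -/

/-- In a `2`-group, a proper cyclic subgroup of largest possible order misses some involution. -/
theorem exists_involution_not_mem {G : Type*} [AddCommGroup G] {k : ℕ}
    (hk : ∀ x : G, 2 ^ k • x = 0) {g : G} (hg : addOrderOf g = AddMonoid.exponent G)
    (htop : AddSubgroup.zmultiples g ≠ ⊤) : ∃ v ∉ AddSubgroup.zmultiples g, v + v = 0 := by
  classical
  obtain ⟨y, hy⟩ : ∃ y, y ∉ AddSubgroup.zmultiples g := by
    by_contra! hc
    exact htop (eq_top_iff.2 fun y _ => hc y)
  have hex : ∃ j : ℕ, 2 ^ j • y ∈ AddSubgroup.zmultiples g := ⟨k, by rw [hk]; exact zero_mem _⟩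
  -- The last element outside `⟨g⟩` in the sequence `y, 2 y, 4 y, …`.
  obtain ⟨x, hx, hx2⟩ : ∃ x ∉ AddSubgroup.zmultiples g, x + x ∈ AddSubgroup.zmultiples g := by
    cases hj : Nat.find hex with
    | zero =>
      have := Nat.find_spec hex
      rw [hj] at this
      simp at this
      exact absurd this (by simpa [AddSubgroup.mem_zmultiples_iff] using hy)
    | succ j =>
      refine ⟨2 ^ j • y, Nat.find_min hex (by omega), ?_⟩
      have := Nat.find_spec hex
      rwa [hj, pow_succ, mul_nsmul, two_nsmul] at this
  obtain ⟨c, hc⟩ := AddSubgroup.mem_zmultiples_iff.1 hx2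
  -- If `c` were odd, `x` would have twice the order of `g`.
  rcases Int.even_or_odd c with ⟨l, rfl⟩ | hodd
  · refine ⟨x - l • g, fun hmem => hx ?_, ?_⟩
    · have := add_mem hmem (AddSubgroup.zsmul_mem_zmultiples g l)
      simpa using this
    · rw [add_smul] at hc
      rw [show x - l • g + (x - l • g) = x + x - (l • g + l • g) by abel, hc, sub_self]
  · exfalso
    obtain ⟨e, -, he⟩ := (Nat.dvd_prime_pow Nat.prime_two).1
      (AddMonoid.exponent_dvd_of_forall_nsmul_eq_zero hk)
    have hex0 (z : G) : 2 ^ e • z = 0 := he ▸ AddMonoid.exponent_nsmul_eq_zero z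
    cases e with
    | zero =>
      have := hex0 x
      simp at this
      exact hx (this ▸ zero_mem _)
    | succ e =>
      have h0 : ((2 ^ e : ℕ) * c : ℤ) • g = 0 := by
        rw [mul_smul, hc, natCast_zsmul, ← two_nsmul, ← mul_nsmul', ← pow_succ]
        exact hex0 x
      have h1 := addOrderOf_dvd_iff_zsmul_eq_zero.2 h0
      rw [hg, he, pow_succ] at h1
      push_cast at h1
      have h2 := (mul_dvd_mul_iff_left (by positivity)).1 h1
      exact (Int.not_even_iff_odd.2 hodd) (even_iff_two_dvd.2 h2)

theorem addOrderOf_eq_two {G : Type*} [AddCommGroup G] {u : G} (hu : u ≠ 0) (h : u + u = 0) :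
    addOrderOf u = 2 :=
  addOrderOf_eq_prime (by rwa [two_nsmul]) hu

/-- In a `2`-group that is not cyclic there are two involutions. -/
theorem oddOrTwoInv_of_not_cyclic {G : Type*} [AddCommGroup G] [Finite G] {k : ℕ}
    (hk : ∀ x : G, 2 ^ k • x = 0) (h : ¬ IsAddCyclic G) : OddOrTwoInv G := by
  obtain ⟨g, hg⟩ := AddMonoid.exists_addOrderOf_eq_exponent
    (AddMonoid.ExponentExists.of_finite (G := G))
  have htop : AddSubgroup.zmultiples g ≠ ⊤ := fun ht =>
    h ⟨g, fun x => (ht ▸ AddSubgroup.mem_top x : x ∈ AddSubgroup.zmultiples g)⟩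
  obtain ⟨v, hv, hv2⟩ := exists_involution_not_mem hk hg htop
  obtain ⟨e, -, he⟩ := (Nat.dvd_prime_pow Nat.prime_two).1
    (AddMonoid.exponent_dvd_of_forall_nsmul_eq_zero hk)
  have hex0 (z : G) : 2 ^ e • z = 0 := he ▸ AddMonoid.exponent_nsmul_eq_zero z
  have hv0 : v ≠ 0 := by rintro rfl; exact hv (zero_mem _)
  cases e with
  | zero => exact absurd (by simpa using hex0 v) hv0
  | succ e =>
    have hz : 2 ^ e • g ∈ AddSubgroup.zmultiples g := nsmul_mem (AddSubgroup.mem_zmultiples g) _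
    refine Or.inr ⟨2 ^ e • g, v, fun h0 => ?_, hv0, fun h0 => hv (h0 ▸ hz), ?_, hv2⟩
    · have := addOrderOf_dvd_iff_nsmul_eq_zero.2 h0
      rw [hg, he] at this
      have := Nat.le_of_dvd (by positivity) this
      rw [pow_succ] at this
      have := Nat.two_pow_pos e
      omega
    · rw [← two_nsmul, ← mul_nsmul, ← pow_succ]
      exact hex0 g

/-- The subgroup generated by two elements `z`, `v` with `2 z = 2 v = 0`, given by its list of
elements; a Klein four-group when `z` and `v` are distinct involutions. -/
def klein {G : Type*} [AddCommGroup G] (z v : G) (hz : z + z = 0) (hv : v + v = 0) :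
    AddSubgroup G where
  carrier := {x | x = 0 ∨ x = z ∨ x = v ∨ x = z + v}
  zero_mem' := Or.inl rfl
  add_mem' := by
    simp only [Set.mem_ofPred_eq]
    intro a b ha hb
    grind
  neg_mem' := by
    simp only [Set.mem_ofPred_eq]
    have hz' : -z = z := neg_eq_of_add_eq_zero_left hz
    have hv' : -v = v := neg_eq_of_add_eq_zero_left hv
    rintro a (rfl | rfl | rfl | rfl) <;> simp [hz', hv', add_comm]

theorem card_klein_le {G : Type*} [AddCommGroup G] (z v : G) (hz : z + z = 0) (hv : v + v = 0) :
    Nat.card (klein z v hz hv) ≤ 4 := by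
  classical
  have : ((klein z v hz hv : AddSubgroup G) : Set G) = ((({0, z, v, z + v} : Finset G)) : Set G) := by
    ext x
    simp [klein]
  rw [← SetLike.coe_sort_coe, this, Nat.card_coe_set_eq, Set.ncard_coe_finset]
  exact Finset.card_le_four

/-- A noncyclic `2`-group is of the form `⟨g⟩ ⊕ ⟨v⟩` with `v` an involution, or elementary of
order eight, or an extension of two groups of the class. In the last case the subgroup is `⟨z, v⟩`,
where `z` is the involution of a cyclic subgroup `⟨g⟩` of largest order `2 ^ (e + 1)` and `v` is
another involution. -/
theorem structure_two_group {G : Type*} [AddCommGroup G] [Finite G] {k : ℕ}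
    (hc : Nat.card G = 2 ^ k) (h : ¬ IsAddCyclic G) :
    (∃ g v, IsSplit G g v) ∨ (Nat.card G = 8 ∧ ∀ x : G, x + x = 0) ∨
    ∃ H : AddSubgroup G, H ≠ ⊥ ∧ H ≠ ⊤ ∧ OddOrTwoInv H ∧ OddOrTwoInv (G ⧸ H) := by
  have hk (x : G) : 2 ^ k • x = 0 := by rw [← hc]; exact card_nsmul_eq_zero'
  obtain ⟨g, hg⟩ := AddMonoid.exists_addOrderOf_eq_exponent
    (AddMonoid.ExponentExists.of_finite (G := G))
  have htop : AddSubgroup.zmultiples g ≠ ⊤ := fun ht =>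
    h ⟨g, fun x => (ht ▸ AddSubgroup.mem_top x : x ∈ AddSubgroup.zmultiples g)⟩
  obtain ⟨v, hv, hv2⟩ := exists_involution_not_mem hk hg htop
  obtain ⟨e, hek, he⟩ := (Nat.dvd_prime_pow Nat.prime_two).1
    (AddMonoid.exponent_dvd_of_forall_nsmul_eq_zero hk)
  have hex0 (z : G) : 2 ^ e • z = 0 := he ▸ AddMonoid.exponent_nsmul_eq_zero z
  have hv0 : v ≠ 0 := by rintro rfl; exact hv (zero_mem _)
  obtain ⟨e, rfl⟩ : ∃ e', e = e' + 1 := by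
    cases e with
    | zero => exact absurd (by simpa using hex0 v) hv0
    | succ e => exact ⟨e, rfl⟩
  have hek' : e + 1 ≠ k := by
    rintro rfl
    exact h (IsAddCyclic.of_exponent_eq_card (he.trans hc.symm))
  by_cases hsplit : e + 2 = k
  · refine Or.inl ⟨g, v, ?_, ?_, hv, hv2⟩
    · rw [hg, he, pow_succ]; simp
    · rw [hg, he, hc, ← hsplit]; ring
  obtain ⟨d, rfl⟩ : ∃ d, k = e + 3 + d := ⟨k - (e + 3), by omega⟩
  refine Or.inr ?_
  by_cases h8 : e = 0 ∧ d = 0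
  · obtain ⟨rfl, rfl⟩ := h8
    exact Or.inl ⟨hc, fun x => by simpa [two_nsmul] using hex0 x⟩
  refine Or.inr ?_
  let z := 2 ^ e • g
  have hzg : z ∈ AddSubgroup.zmultiples g := nsmul_mem (AddSubgroup.mem_zmultiples g) _
  have hz0 : z ≠ 0 := by
    intro h0
    have := addOrderOf_dvd_iff_nsmul_eq_zero.2 h0
    rw [hg, he] at this
    exact absurd ((Nat.pow_dvd_pow_iff_le_right (by norm_num)).1 this) (by omega)
  have hz2 : z + z = 0 := by
    rw [← two_nsmul, ← mul_nsmul, ← pow_succ]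
    exact hex0 g
  have hzv : z ≠ v := fun h0 => hv (h0 ▸ hzg)
  let H := klein z v hz2 hv2
  have hzH : z ∈ H := Or.inr (Or.inl rfl)
  have hvH : v ∈ H := Or.inr (Or.inr (Or.inl rfl))
  have hH2 : ∀ x ∈ H, x + x = 0 := by
    rintro x (rfl | rfl | rfl | rfl)
    · simp
    · exact hz2
    · exact hv2
    · rw [add_add_add_comm, hz2, hv2, add_zero]
  have hH4 : Nat.card H ≤ 4 := card_klein_le z v hz2 hv2
  have hcard := AddSubgroup.card_eq_card_quotient_mul_card_addSubgroup H
  have hKcard : 2 ^ (e + 1 + d) ≤ Nat.card (G ⧸ H) := by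
    have : 2 ^ (e + 3 + d) = 2 ^ (e + 1 + d) * 4 := by ring
    rw [hc, this] at hcard
    have := Nat.mul_le_mul_left (Nat.card (G ⧸ H)) hH4
    omega
  refine ⟨H, ?_, ?_, ?_, ?_⟩
  · intro hb
    rw [hb] at hzH
    exact hz0 hzH
  · intro ht
    have h1 : Nat.card (G ⧸ H) = 1 := by rw [ht]; simp
    rw [h1] at hKcard
    have := Nat.one_lt_two_pow (n := e + 1 + d) (by omega)
    omega
  · exact Or.inr ⟨⟨z, hzH⟩, ⟨v, hvH⟩, fun h0 => hz0 (congrArg Subtype.val h0),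
      fun h0 => hv0 (congrArg Subtype.val h0), fun h0 => hzv (congrArg Subtype.val h0),
      Subtype.ext hz2, Subtype.ext hv2⟩
  · refine oddOrTwoInv_of_not_cyclic (k := e + 3 + d) ?_ ?_
    · intro x
      obtain ⟨x, rfl⟩ := QuotientAddGroup.mk_surjective x
      rw [← QuotientAddGroup.mk_nsmul, hk, QuotientAddGroup.mk_zero]
    · intro hcyc
      obtain ⟨x, hx⟩ := hcyc.exists_generator
      obtain ⟨x, rfl⟩ := QuotientAddGroup.mk_surjective x
      have hox := addOrderOf_eq_card_of_forall_mem_zmultiples hx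
      -- `x` is killed by the exponent `2 ^ (e + 1)`, and its image generates `G ⧸ H`.
      have hle : Nat.card (G ⧸ H) ∣ 2 ^ (e + 1) := by
        rw [← hox, addOrderOf_dvd_iff_nsmul_eq_zero, ← QuotientAddGroup.mk_nsmul, hex0,
          QuotientAddGroup.mk_zero]
      have hle' := hKcard.trans (Nat.le_of_dvd (by positivity) hle)
      have hd : d = 0 := by
        have := (Nat.pow_le_pow_iff_right (a := 2) (by norm_num)).1 hle'
        omega
      subst hd
      have hK : Nat.card (G ⧸ H) = 2 ^ (e + 1) :=
        le_antisymm (Nat.le_of_dvd (by positivity) hle) hKcard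
      obtain ⟨f, rfl⟩ : ∃ f, e = f + 1 := ⟨e - 1, by omega⟩
      -- Since `z = 2 w`, it lies in `⟨x⟩ ∩ H = 0`.
      let w := 2 ^ f • g
      have hw : w + w = z := by
        rw [← two_nsmul, ← mul_nsmul, ← pow_succ]
      obtain ⟨c, hcw⟩ := AddSubgroup.mem_zmultiples_iff.1 (hx (w : G ⧸ H))
      have hmem : w - c • x ∈ H := by
        rw [← QuotientAddGroup.eq_zero_iff, QuotientAddGroup.mk_sub, QuotientAddGroup.mk_zsmul,
          hcw, sub_self]
      have hzc : z = (c + c) • x := by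
        have := hH2 _ hmem
        rw [add_smul, ← hw, ← sub_eq_zero, ← this]
        abel
      have h0 : (c + c) • (x : G ⧸ H) = 0 := by
        rw [← QuotientAddGroup.mk_zsmul, ← hzc, QuotientAddGroup.eq_zero_iff]
        exact hzH
      have h1 := addOrderOf_dvd_iff_zsmul_eq_zero.2 h0
      rw [hox, hK] at h1
      obtain ⟨t, ht⟩ := h1
      apply hz0
      rw [hzc, ht, mul_comm, mul_smul, natCast_zsmul, hex0, smul_zero]

/-- Dividing by a subgroup of odd order preserves the class. -/
theorem OddOrTwoInv.quotient {G : Type*} [AddCommGroup G] [Finite G] (h : OddOrTwoInv G)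
    (H : AddSubgroup G) (hH : Odd (Nat.card H)) : OddOrTwoInv (G ⧸ H) := by
  have key (u : G) (hu : u ≠ 0) (hu2 : u + u = 0) : u ∉ H := by
    intro hm
    have h1 := addOrderOf_dvd_natCard (⟨u, hm⟩ : H)
    rw [addOrderOf_eq_two (fun h0 => hu (congrArg Subtype.val h0)) (Subtype.ext hu2)] at h1
    exact (Nat.not_even_iff_odd.2 hH) (even_iff_two_dvd.2 h1)
  rcases h with h | ⟨u, v, hu, hv, huv, hu2, hv2⟩
  · left
    rw [AddSubgroup.card_eq_card_quotient_mul_card_addSubgroup H] at h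
    exact (Nat.odd_mul.1 h).1
  · right
    refine ⟨u, v, ?_, ?_, ?_, ?_, ?_⟩
    · rw [Ne, QuotientAddGroup.eq_zero_iff]; exact key u hu hu2
    · rw [Ne, QuotientAddGroup.eq_zero_iff]; exact key v hv hv2
    · rw [Ne, ← sub_eq_zero, ← QuotientAddGroup.mk_sub, QuotientAddGroup.eq_zero_iff]
      refine key _ (sub_ne_zero.2 huv) ?_
      rw [sub_add_sub_comm, hu2, hv2, sub_zero]
    · rw [← QuotientAddGroup.mk_add, hu2, QuotientAddGroup.mk_zero]
    · rw [← QuotientAddGroup.mk_add, hv2, QuotientAddGroup.mk_zero]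

theorem not_isAddCyclic {G : Type*} [AddCommGroup G] [Finite G] {u v : G} (hu : u ≠ 0)
    (hv : v ≠ 0) (huv : u ≠ v) (hu2 : u + u = 0) (hv2 : v + v = 0) : ¬ IsAddCyclic G := by
  classical
  intro hcyc
  have := Fintype.ofFinite G
  have h1 := IsAddCyclic.card_nsmul_eq_zero_le (α := G) (n := 2) two_pos
  have h2 : ({0, u, v} : Finset G) ⊆ Finset.univ.filter (fun a : G => 2 • a = 0) := by
    intro x hx
    simp only [Finset.mem_insert, Finset.mem_singleton] at hx
    rcases hx with rfl | rfl | rfl <;> simp [two_nsmul, hu2, hv2]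
  have h3 := Finset.card_le_card h2
  rw [Finset.card_eq_three.2 ⟨0, u, v, hu.symm, hv.symm, huv, rfl⟩] at h3
  omega

/-- A group of the class has odd order which is `1` or prime, or it is one of the two exceptional
kinds of `2`-groups, or an extension of two groups of the class. If an odd prime divides the order
and the group is not of prime order, a subgroup of that prime order works. -/
theorem structure_class {G : Type*} [AddCommGroup G] [Finite G] (h : OddOrTwoInv G) :
    (Odd (Nat.card G) ∧ (Nat.card G = 1 ∨ (Nat.card G).Prime)) ∨
    (∃ k, Nat.card G = 2 ^ k ∧ ∃ g v, IsSplit G g v) ∨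
    (Nat.card G = 8 ∧ ∀ x : G, x + x = 0) ∨
    ∃ H : AddSubgroup G, H ≠ ⊥ ∧ H ≠ ⊤ ∧ OddOrTwoInv H ∧ OddOrTwoInv (G ⧸ H) := by
  rcases Nat.eq_two_pow_or_exists_odd_prime_and_dvd (Nat.card G) with ⟨k, hk⟩ | ⟨p, hp, hpd, hpo⟩
  · rcases h with h | ⟨u, v, hu, hv, huv, hu2, hv2⟩
    · left
      refine ⟨h, Or.inl ?_⟩
      rw [hk] at h ⊢
      by_cases h0 : k = 0
      · simp [h0]
      · exact absurd ((Nat.even_pow).2 ⟨even_two, h0⟩) (Nat.not_even_iff_odd.2 h)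
    · rcases structure_two_group hk (not_isAddCyclic hu hv huv hu2 hv2) with h | h | h
      · exact Or.inr (Or.inl ⟨k, hk, h⟩)
      · exact Or.inr (Or.inr (Or.inl h))
      · exact Or.inr (Or.inr (Or.inr h))
  · have := Fact.mk hp
    obtain ⟨x, hx⟩ := exists_prime_addOrderOf_dvd_card' p hpd
    have hH : Nat.card (AddSubgroup.zmultiples x) = p := by rw [Nat.card_zmultiples, hx]
    by_cases ht : AddSubgroup.zmultiples x = ⊤
    · left
      rw [ht, AddSubgroup.card_top] at hH
      rw [hH]
      exact ⟨hpo, Or.inr hp⟩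
    · refine Or.inr (Or.inr (Or.inr ⟨AddSubgroup.zmultiples x, ?_, ht, ?_, ?_⟩))
      · intro hb
        rw [hb, AddSubgroup.card_bot] at hH
        exact hp.one_lt.ne hH
      · left; rwa [hH]
      · exact h.quotient _ (by rwa [hH])

/-! ### Existence of complete mappings and partitions -/

theorem card_lt_of_ne {G : Type*} [AddCommGroup G] [Finite G] (H : AddSubgroup G) (hb : H ≠ ⊥)
    (ht : H ≠ ⊤) : Nat.card H < Nat.card G ∧ 1 < Nat.card (G ⧸ H) ∧
      Nat.card (G ⧸ H) < Nat.card G := by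
  have h0 := AddSubgroup.card_eq_card_quotient_mul_card_addSubgroup H
  have h1 : 1 < Nat.card H := (AddSubgroup.one_lt_card_iff_ne_bot H).2 hb
  have h2 : 1 < Nat.card (G ⧸ H) := by
    have : Nontrivial (G ⧸ H) := QuotientAddGroup.nontrivial_iff.2 ht
    exact Finite.one_lt_card
  refine ⟨?_, h2, ?_⟩ <;> rw [h0] <;> nlinarith

/-- A finite abelian group of odd order or with at least two involutions has a complete mapping. -/
theorem OddOrTwoInv.hasCM {G : Type*} [AddCommGroup G] [Finite G] (h : OddOrTwoInv G) :
    HasCM G := by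
  induction hn : Nat.card G using Nat.strong_induction_on generalizing G with
  | _ n ih =>
    have := Fintype.ofFinite G
    subst hn
    rcases structure_class h with ⟨ho, -⟩ | ⟨-, -, g, v, hs⟩ | ⟨h8, h2⟩ | ⟨H, hb, ht, hH, hK⟩
    · exact hasCM_of_odd ho
    · exact hasCM_of_isSplit hs
    · exact (partition_of_card_eight h8 h2).hasCM
    · obtain ⟨h1, -, h2⟩ := card_lt_of_ne H hb ht
      exact (partition_of_subgroup H ht (ih _ h1 hH rfl) (ih _ h2 hK rfl)).hasCM

theorem stmt4 {Γ : Type*} [AddCommGroup Γ] [Fintype Γ] (hG : InClassG Γ)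
    (h : (∃ p q : ℕ, p.Prime ∧ q.Prime ∧ Odd p ∧ Odd q ∧
            p * q ∣ (Fintype.card Γ / 2 ^ (Fintype.card Γ).factorization 2)) ∨
         AddMonoid.exponent Γ < Fintype.card Γ / 2) :
    ∃ m : ℕ, 1 < m ∧ m < Fintype.card Γ ∧ HasZeroSumCMPartition Γ m := by
  have hdvd {p q : ℕ} (hd : p * q ∣ Fintype.card Γ / 2 ^ (Fintype.card Γ).factorization 2) :
      p * q ∣ Fintype.card Γ := hd.trans (Nat.ordCompl_dvd _ _)
  rw [← Nat.card_eq_fintype_card] at h hdvd ⊢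
  rcases structure_class hG.oddOrTwoInv with ⟨ho, hc⟩ | ⟨k, hk, g, v, hs⟩ | ⟨h8, h2⟩ |
    ⟨H, hb, ht, hH, hK⟩
  · -- A trivial group or a group of prime order violates both alternatives of the hypothesis.
    exfalso
    rcases h with ⟨p, q, hp, hq, -, -, hd⟩ | hlt
    · have hd := hdvd hd
      rcases hc with hc | hc
      · rw [hc, Nat.dvd_one] at hd
        exact hp.one_lt.ne' (Nat.eq_one_of_mul_eq_one_right hd)
      · rcases (Nat.dvd_prime hc).1 hd with h1 | h1
        · exact hp.one_lt.ne' (Nat.eq_one_of_mul_eq_one_right h1)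
        · exact Nat.not_prime_mul hp.one_lt.ne' hq.one_lt.ne' (h1 ▸ hc)
    · have hcyc : IsAddCyclic Γ := by
        rcases hc with hc | hc
        · have := (Nat.card_eq_one_iff_unique.1 hc).1
          infer_instance
        · have := Fact.mk hc
          exact isAddCyclic_of_prime_card rfl
      rw [IsAddCyclic.exponent_eq_card] at hlt
      omega
  · -- So does a split `2`-group: its exponent is at least half its order.
    exfalso
    rcases h with ⟨p, q, hp, hq, hpo, -, hd⟩ | hlt
    · have hd := hdvd hd
      rw [hk] at hd
      have := (Nat.prime_dvd_prime_iff_eq hp Nat.prime_two).1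
        (hp.dvd_of_dvd_pow ((dvd_mul_right p q).trans hd))
      subst this
      exact absurd hpo (by decide)
    · have h1 := Nat.le_of_dvd (Nat.pos_of_ne_zero AddMonoid.exponent_ne_zero_of_finite)
        (AddMonoid.addOrder_dvd_exponent g)
      have := hs.2.1
      omega
  · exact ⟨4, by norm_num, by omega, partition_of_card_eight h8 h2⟩
  · obtain ⟨h1, h2, h3⟩ := card_lt_of_ne H hb ht
    exact ⟨_, h2, h3, partition_of_subgroup H ht hH.hasCM hK.hasCM⟩
end

section
/- Let j > 1 and let Γ be a finite Abelian group in the class 𝒢 of order n = 2^α with α ≥ 2. Set m = 2·exp(Γ) if exp(Γ) = |Γ|/2, and m = max{4, exp(Γ)} if exp(Γ) < |Γ|/2. Then there exists a Γ-Kotzig array set KAS_Γ(j, m; n/m). -/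
/-- A `Γ`-Kotzig array set `KAS_Γ(j, m; t)`. -/
def IsKotzigArraySet (Γ : Type*) [AddCommGroup Γ] [Fintype Γ] (j m t : ℕ) : Prop :=
  ∃ x : Fin t × Fin j × Fin m → Γ,
    (∀ i : Fin j, Function.Bijective (fun p : Fin t × Fin m => x (p.1, i, p.2))) ∧
    (∀ (s : Fin t) (i : Fin j), ∑ l : Fin m, x (s, i, l) = 0) ∧
    (∀ (s : Fin t) (l : Fin m), ∑ i : Fin j, x (s, i, l) = 0)

open Function in
/-- A complete mapping of an abelian group `G`: a bijection `φ` such that `x ↦ x + φ x` is also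
bijective. -/
def HasCompleteMapping (G : Type*) [AddCommGroup G] : Prop :=
  ∃ φ : G → G, Bijective φ ∧ Bijective (fun x => x + φ x)

open Function in
/-- Three-row Kotzig array sets with block length `m`, over arbitrary finite index types: `T` indexes
the arrays and `L` the columns. Only the first two rows `f`, `g` are recorded, since the third one
must be `-(f + g)`. -/
def HasTriple (G : Type*) [AddCommGroup G] (m : ℕ) : Prop :=
  ∃ (T L : Type) (_ : Fintype T) (_ : Fintype L) (f g : T × L → G), Fintype.card L = m ∧
    Bijective f ∧ Bijective g ∧ Bijective (fun p => f p + g p) ∧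
    (∀ s, ∑ l, f (s, l) = 0) ∧ (∀ s, ∑ l, g (s, l) = 0)

open Function in
theorem HasTriple.of_types {G : Type*} [AddCommGroup G] {m : ℕ} {T L : Type*} [Fintype T]
    [Fintype L] (f g : T × L → G) (hL : Fintype.card L = m)
    (hf : Bijective f) (hg : Bijective g) (hfg : Bijective (fun p => f p + g p))
    (sf : ∀ s, ∑ l, f (s, l) = 0) (sg : ∀ s, ∑ l, g (s, l) = 0) : HasTriple G m := by
  let eT := (Fintype.equivFin T).symm
  let eL := (Fintype.equivFin L).symm
  let e := eT.prodCongr eL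
  refine ⟨Fin _, Fin _, inferInstance, inferInstance, f ∘ e, g ∘ e, by simpa using hL,
    hf.comp e.bijective, hg.comp e.bijective, hfg.comp e.bijective, fun s => ?_, fun s => ?_⟩
  · rw [← sf (eT s)]
    exact Equiv.sum_comp eL (fun l => f (eT s, l))
  · rw [← sg (eT s)]
    exact Equiv.sum_comp eL (fun l => g (eT s, l))

theorem HasTriple.hasCompleteMapping {G : Type*} [AddCommGroup G] {m : ℕ} (h : HasTriple G m) :
    HasCompleteMapping G := by
  obtain ⟨T, L, _, _, f, g, -, hf, hg, hfg, -, -⟩ := h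
  let e := Equiv.ofBijective f hf
  refine ⟨g ∘ e.symm, hg.comp e.symm.bijective, ?_⟩
  convert hfg.comp e.symm.bijective using 2 with x
  simp only [Function.comp]
  congr 1
  exact (e.apply_symm_apply x).symm

/-- A single block: a complete mapping of a group whose elements sum to `0`. -/
theorem HasCompleteMapping.hasTriple {G : Type*} [AddCommGroup G] [Fintype G]
    (h : HasCompleteMapping G) (h0 : ∑ x : G, x = 0) : HasTriple G (Fintype.card G) := by
  obtain ⟨φ, h1, h2⟩ := h
  have hsnd : Function.Bijective (Prod.snd : Unit × G → G) :=
    (Equiv.punitProd G).bijective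
  refine HasTriple.of_types (T := Unit) (L := G) (fun p => p.2) (fun p => φ p.2) rfl
    hsnd (h1.comp hsnd) (h2.comp hsnd) (fun _ => h0) (fun _ => ?_)
  exact (Equiv.sum_comp (Equiv.ofBijective φ h1) (fun x => x)).trans h0

theorem HasTriple.congr {G G' : Type*} [AddCommGroup G] [AddCommGroup G'] {m : ℕ}
    (e : G ≃+ G') (h : HasTriple G m) : HasTriple G' m := by
  obtain ⟨T, L, _, _, f, g, hL, hf, hg, hfg, sf, sg⟩ := h
  refine ⟨T, L, inferInstance, inferInstance, e ∘ f, e ∘ g, hL, e.bijective.comp hf,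
    e.bijective.comp hg, ?_, fun s => ?_, fun s => ?_⟩
  · convert e.bijective.comp hfg using 2 with x
    simp
  · simp [← map_sum, sf]
  · simp [← map_sum, sg]

/-! ### From three rows to any number of rows -/

open Function in
/-- Rows are added in opposite pairs `f`, `-f`, starting from `f, -f` or `f, g, -(f + g)`. -/
theorem exists_rows {G T L : Type*} [AddCommGroup G] [Fintype L] (f g : T × L → G)
    (hf : Bijective f) (hg : Bijective g) (hfg : Bijective (fun p => f p + g p))
    (sf : ∀ s, ∑ l, f (s, l) = 0) (sg : ∀ s, ∑ l, g (s, l) = 0) :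
    ∀ j : ℕ, ∃ x : Fin (j + 2) → T × L → G, (∀ i, Bijective (x i)) ∧
      (∀ i s, ∑ l, x i (s, l) = 0) ∧ ∀ p, ∑ i, x i p = 0
  | 0 => by
    refine ⟨![f, fun p => -f p], ?_, ?_, ?_⟩
    · intro i; fin_cases i
      · exact hf
      · exact (Equiv.neg G).bijective.comp hf
    · intro i s; fin_cases i <;> simp [sf]
    · intro p; simp
  | 1 => by
    refine ⟨![f, g, fun p => -(f p + g p)], ?_, ?_, ?_⟩
    · intro i; fin_cases i
      · exact hf
      · exact hg
      · exact (Equiv.neg G).bijective.comp hfg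
    · intro i s; fin_cases i <;> simp [sf, sg, Finset.sum_add_distrib]
    · intro p; simp [Fin.sum_univ_three]
  | j + 2 => by
    obtain ⟨x, h1, h2, h3⟩ := exists_rows f g hf hg hfg sf sg j
    refine ⟨Fin.cons f (Fin.cons (fun p => -f p) x), ?_, ?_, ?_⟩
    · refine Fin.cases hf (Fin.cases ?_ ?_)
      · exact (Equiv.neg G).bijective.comp hf
      · simpa using h1
    · refine Fin.cases ?_ (Fin.cases ?_ ?_)
      · simpa using sf
      · simpa using sf
      · simpa using h2
    · intro p
      rw [Fin.sum_univ_succ, Fin.sum_univ_succ]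
      simp [h3 p]

theorem HasTriple.isKotzigArraySet {G : Type*} [AddCommGroup G] [Fintype G] {m : ℕ}
    (h : HasTriple G m) (hm : 0 < m) (j : ℕ) (hj : 1 < j) :
    IsKotzigArraySet G j m (Fintype.card G / m) := by
  obtain ⟨T, L, _, _, f, g, hL, hf, hg, hfg, sf, sg⟩ := h
  obtain ⟨j, rfl⟩ := Nat.exists_eq_add_of_le' hj
  obtain ⟨x, h1, h2, h3⟩ := exists_rows f g hf hg hfg sf sg j
  have hT : Fintype.card T = Fintype.card G / m := by
    rw [← Fintype.card_congr (Equiv.ofBijective f hf), Fintype.card_prod, hL,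
      Nat.mul_div_cancel _ hm]
  let eT := (Fintype.equivFinOfCardEq hT).symm
  let eL := (Fintype.equivFinOfCardEq hL).symm
  refine ⟨fun p => x p.2.1 (eT p.1, eL p.2.2), fun i => ?_, fun s i => ?_, fun s l => h3 (eT s, eL l)⟩
  · exact (h1 i).comp (eT.prodCongr eL).bijective
  · exact (Equiv.sum_comp eL (fun l => x i (eT s, l))).trans (h2 i _)

/-! ### Extensions -/

/-- Representatives of the cosets of `H`, translated by an enumeration of `H`, enumerate the
group. -/
theorem bijective_add_of_mk {G T L : Type*} [AddCommGroup G] (H : AddSubgroup G) (u : T → G)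
    (v : L → H) (hu : Function.Bijective fun s => (u s : G ⧸ H)) (hv : Function.Bijective v) :
    Function.Bijective (fun p : T × L => u p.1 + (v p.2 : G)) := by
  constructor
  · rintro ⟨s, l⟩ ⟨s', l'⟩ h
    simp only at h
    have hs : s = s' := hu.1 <| by
      have := congrArg (QuotientAddGroup.mk (s := H)) h
      simpa [QuotientAddGroup.mk_add, (QuotientAddGroup.eq_zero_iff _).2 (v _).2] using this
    subst hs
    have : v l = v l' := Subtype.ext (add_left_cancel h)
    rw [hv.1 this]
  · intro x
    obtain ⟨s, hs⟩ := hu.2 (x : G ⧸ H)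
    obtain ⟨l, hl⟩ := hv.2 ⟨-u s + x, QuotientAddGroup.eq.1 hs⟩
    exact ⟨(s, l), by simp [hl]⟩

/-- The blocks are the cosets of `H`: the coset of `x` sums to `|H| • x + ∑ H`, and this vanishes
when `|H|` is a multiple of the exponent and `∑ H = 0`. -/
theorem HasTriple.of_subgroup {G : Type*} [AddCommGroup G] [Finite G] (H : AddSubgroup G)
    [Fintype H] (h0 : ∑ x : H, x = 0) (hH : HasCompleteMapping H)
    (hQ : HasCompleteMapping (G ⧸ H)) (hexp : ∀ x : G, Fintype.card H • x = 0) :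
    HasTriple G (Fintype.card H) := by
  have := Fintype.ofFinite (G ⧸ H)
  obtain ⟨φ, h1, h2⟩ := hH
  obtain ⟨θ, k1, k2⟩ := hQ
  have h0' : ∑ x : H, (x : G) = 0 := by
    have := congrArg (H.subtype) h0
    simpa [map_sum] using this
  have hφ : ∑ x : H, (φ x : G) = 0 :=
    (Equiv.sum_comp (Equiv.ofBijective φ h1) (fun x : H => (x : G))).trans h0'
  refine HasTriple.of_types (T := G ⧸ H) (L := H) (fun p => p.1.out + (p.2 : G))
    (fun p => (θ p.1).out + (φ p.2 : G)) rfl ?_ ?_ ?_ ?_ ?_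
  · exact bijective_add_of_mk H (fun q : G ⧸ H => q.out) id (by simp)
      Function.bijective_id
  · exact bijective_add_of_mk H (fun q : G ⧸ H => (θ q).out) φ (by simpa using k1) h1
  · convert bijective_add_of_mk H (fun q : G ⧸ H => q.out + (θ q).out) (fun x => x + φ x)
      (by simpa using k2) h2 using 2 with p
    push_cast
    abel
  · intro s
    simp [Finset.sum_add_distrib, h0', ← Nat.card_eq_fintype_card] at hexp ⊢
    exact hexp _
  · intro s
    simp [Finset.sum_add_distrib, hφ, ← Nat.card_eq_fintype_card] at hexp ⊢
    exact hexp _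

/-! ### Base groups -/

/-- With `χ : ℤ/2M → ℤ/2` the indicator of the upper half, so that `χ (i + M) = χ i + 1`, the map
`φ (ε, i) = (ε + χ (i + ε), i + ε)` is a complete mapping, since `(ε, i) + φ (ε, i)` equals
`(χ (i + ε), 2 i + ε)`: its second entry determines `ε` and, up to a shift by `M`, also `i`. -/
theorem hasCompleteMapping_zmod (M : ℕ) (hM : 0 < M) :
    HasCompleteMapping (ZMod 2 × ZMod (2 * M)) := by
  have : NeZero (2 * M) := ⟨by omega⟩
  let χ : ZMod (2 * M) → ZMod 2 := fun i => if i.val < M then 0 else 1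
  have key : ∀ j j' : ZMod (2 * M), 2 * j = 2 * j' → χ j = χ j' → j = j' := by
    intro j j' h hχ
    have hmod : 2 * j.val ≡ 2 * j'.val [MOD 2 * M] := by
      rw [← ZMod.natCast_eq_natCast_iff]
      push_cast
      simpa using h
    have hmod' : j.val ≡ j'.val [MOD M] := Nat.ModEq.mul_left_cancel' two_ne_zero hmod
    have l1 := j.val_lt
    have l2 := j'.val_lt
    apply ZMod.val_injective
    simp only [χ] at hχ
    rcases lt_or_ge j.val M with a | a <;> rcases lt_or_ge j'.val M with b | b
    · exact hmod'.eq_of_lt_of_lt a b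
    · simp [a, b.not_gt] at hχ
    · simp [a.not_gt, b] at hχ
    · have : j.val - M ≡ j'.val - M [MOD M] := by
        apply Nat.ModEq.add_right_cancel' M
        rwa [Nat.sub_add_cancel a, Nat.sub_add_cancel b]
      have := this.eq_of_lt_of_lt (by omega) (by omega)
      omega
  refine ⟨fun p => (p.1 + χ (p.2 + p.1.val), p.2 + p.1.val),
    Finite.injective_iff_bijective.1 ?_, Finite.injective_iff_bijective.1 ?_⟩
  · rintro ⟨e, i⟩ ⟨e', i'⟩ h
    simp only [Prod.mk.injEq] at h
    obtain ⟨h1, h2⟩ := h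
    rw [h2] at h1
    have he := add_right_cancel h1
    subst he
    rw [add_right_cancel h2]
  · rintro ⟨e, i⟩ ⟨e', i'⟩ h
    simp only [Prod.mk_add_mk, Prod.mk.injEq, ← add_assoc, CharTwo.add_self_eq_zero, zero_add] at h
    obtain ⟨h1, h2⟩ := h
    have he : e = e' := by
      have := congrArg (ZMod.castHom (Dvd.intro M rfl) (ZMod 2)) h2
      simpa only [map_add, map_natCast, CharTwo.add_self_eq_zero, zero_add,
        ZMod.natCast_zmod_val] using this
    subst he
    have := key (i + e.val) (i' + e.val) (by linear_combination h2) h1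
    rw [add_right_cancel this]

theorem sum_zmod (M : ℕ) [NeZero (2 * M)] : ∑ x : ZMod 2 × ZMod (2 * M), x = 0 := by
  apply Prod.ext
  · rw [Prod.fst_sum, Fintype.sum_prod_type]
    have : ((2 * M : ℕ) : ZMod 2) = 0 := (ZMod.natCast_eq_zero_iff _ _).2 (Dvd.intro M rfl)
    simp only [Finset.sum_const, Finset.card_univ, ZMod.card, nsmul_eq_mul, this]
    simp
  · rw [Prod.snd_sum, Fintype.sum_prod_type]
    have h : ∑ i : ZMod (2 * M), i = - ∑ i : ZMod (2 * M), i := by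
      rw [← Finset.sum_neg_distrib]
      exact (Equiv.sum_comp (Equiv.neg _) (fun i : ZMod (2 * M) => i)).symm
    simp only [Finset.sum_const, Finset.card_univ, ZMod.card, two_nsmul, Prod.snd_zero]
    nth_rewrite 1 [h]
    exact neg_add_cancel _

/-- Multiplication by a root `ω` of `ω³ = ω + 1` in the field with eight elements is a linear
complete mapping, so both halves of the group cut out by one coordinate serve as blocks. -/
theorem hasTriple_eight : HasTriple (Fin 3 → ZMod 2) 4 := by
  refine HasTriple.of_types (T := ZMod 2) (L := ZMod 2 × ZMod 2)
    (fun p => ![p.1, p.2.1, p.2.2]) (fun p => ![p.2.2, p.1 + p.2.2, p.2.1]) rfl ?_ ?_ ?_ ?_ ?_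
  all_goals decide

/-! ### Subgroups generated by an element and an outside involution -/

theorem exists_embedding {G : Type*} [AddCommGroup G] (M : ℕ) (g a : G)
    (hg : addOrderOf g = 2 * M) (ha : a ∉ AddSubgroup.zmultiples g) (h2 : (2 : ℤ) • a = 0) :
    ∃ ψ : ZMod 2 × ZMod (2 * M) →+ G, Function.Injective ψ ∧ ψ (0, 1) = g ∧
      ∀ x ∈ ψ.range, ∃ c d : ℤ, x = c • g + d • a := by
  have hgn : ((2 * M : ℕ) : ℤ) • g = 0 := by
    rw [← hg, natCast_zsmul, addOrderOf_nsmul_eq_zero]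
  let ψ : ZMod 2 × ZMod (2 * M) →+ G :=
    (ZMod.lift 2 ⟨zmultiplesHom G a, by simpa using h2⟩).coprod
      (ZMod.lift (2 * M) ⟨zmultiplesHom G g, by simpa using hgn⟩)
  have hψ : ∀ c d : ℤ, ψ ((d : ZMod 2), (c : ZMod (2 * M))) = c • g + d • a := by
    intro c d
    simp only [ψ, AddMonoidHom.coprod_apply, ZMod.lift_coe, zmultiplesHom_apply]
    exact add_comm _ _
  refine ⟨ψ, ?_, by simpa using hψ 1 0, ?_⟩
  · rw [injective_iff_map_eq_zero]
    rintro ⟨d, c⟩ h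
    obtain ⟨d, rfl⟩ := ZMod.intCast_surjective d
    obtain ⟨c, rfl⟩ := ZMod.intCast_surjective c
    rw [hψ] at h
    rcases Int.even_or_odd' d with ⟨e, rfl | rfl⟩
    · rw [mul_comm, mul_smul, h2, smul_zero, add_zero] at h
      have := addOrderOf_dvd_iff_zsmul_eq_zero.2 h
      rw [hg] at this
      have hc := (ZMod.intCast_zmod_eq_zero_iff_dvd c (2 * M)).2 (by exact_mod_cast this)
      have hd := (ZMod.intCast_zmod_eq_zero_iff_dvd (2 * e) 2).2 (by simp)
      rw [hc, hd]; rfl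
    · rw [add_smul, mul_comm, mul_smul, h2, smul_zero, zero_add, one_smul] at h
      refine absurd ⟨-c, ?_⟩ ha
      simp only [neg_smul]
      exact neg_eq_of_add_eq_zero_right h
  · rintro _ ⟨⟨d, c⟩, rfl⟩
    obtain ⟨d, rfl⟩ := ZMod.intCast_surjective d
    obtain ⟨c, rfl⟩ := ZMod.intCast_surjective c
    exact ⟨c, d, hψ c d⟩

/-- In a 2-group, outside a proper cyclic subgroup generated by an element `g` of maximal order
there is an involution: if `2 y = c g` with `y ∉ ⟨g⟩`, maximality makes `c = 2 d` even, and
`y - d g` has order two. -/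
theorem exists_involution {G : Type*} [AddCommGroup G] [Finite G] {α k : ℕ}
    (hcard : Nat.card G = 2 ^ α) (g : G) (hg : addOrderOf g = 2 ^ k)
    (hexp : ∀ x : G, (2 ^ k : ℤ) • x = 0) (hne : AddSubgroup.zmultiples g ≠ ⊤) :
    ∃ a : G, a ∉ AddSubgroup.zmultiples g ∧ (2 : ℤ) • a = 0 := by
  have hQ : 2 ∣ Nat.card (G ⧸ AddSubgroup.zmultiples g) := by
    have h1 : Nat.card (G ⧸ AddSubgroup.zmultiples g) ∣ 2 ^ α := by
      rw [← hcard]; exact AddSubgroup.card_quotient_dvd_card _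
    obtain ⟨i, -, hi⟩ := (Nat.dvd_prime_pow Nat.prime_two).1 h1
    rcases i with _ | i
    · exact absurd (AddSubgroup.index_eq_one.1 (by simpa [AddSubgroup.index] using hi)) hne
    · rw [hi, pow_succ]; exact Dvd.intro_left _ rfl
  obtain ⟨q, hq⟩ := exists_prime_addOrderOf_dvd_card' 2 hQ
  obtain ⟨y, rfl⟩ := QuotientAddGroup.mk_surjective q
  have hy : y ∉ AddSubgroup.zmultiples g := by
    intro h
    rw [(QuotientAddGroup.eq_zero_iff y).2 h, addOrderOf_zero] at hq
    omega
  have h2y : (2 : ℤ) • y ∈ AddSubgroup.zmultiples g := by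
    rw [← QuotientAddGroup.eq_zero_iff]
    have := addOrderOf_nsmul_eq_zero (y : G ⧸ AddSubgroup.zmultiples g)
    rw [hq] at this
    rw [QuotientAddGroup.mk_zsmul]
    exact_mod_cast this
  obtain ⟨c, hc⟩ := h2y
  simp only at hc
  rcases Int.even_or_odd' c with ⟨d, rfl | rfl⟩
  · refine ⟨y - d • g, fun h => hy ?_, ?_⟩
    · simpa using add_mem h (AddSubgroup.zsmul_mem_zmultiples g d)
    · rw [smul_sub, ← hc, smul_smul, sub_self]
  · exfalso
    rcases k with _ | k
    · have : y = 0 := by simpa using hexp y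
      exact hy (this ▸ zero_mem _)
    · have h3 : ((2 * d + 1) * 2 ^ k : ℤ) • g = 0 := by
        rw [mul_comm, mul_smul, hc, smul_smul, ← pow_succ]
        exact hexp y
      have h4 := addOrderOf_dvd_iff_zsmul_eq_zero.2 h3
      rw [hg] at h4
      push_cast at h4
      rw [pow_succ, mul_comm, mul_dvd_mul_iff_right (by positivity)] at h4
      omega

/-! ### The induction -/

/-- Splitting off a subgroup isomorphic to `ℤ/2 × ℤ/2M`. -/
theorem HasTriple.of_embedding {G : Type*} [AddCommGroup G] [Finite G] (M : ℕ) (hM : 0 < M)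
    (ψ : ZMod 2 × ZMod (2 * M) →+ G) (hψ : Function.Injective ψ)
    (hQ : HasCompleteMapping (G ⧸ ψ.range)) (hexp : ∀ x : G, (4 * M) • x = 0) :
    HasTriple G (4 * M) := by
  have : NeZero (2 * M) := ⟨by omega⟩
  have := Fintype.ofFinite ψ.range
  let e : ZMod 2 × ZMod (2 * M) ≃+ ψ.range := AddMonoidHom.ofInjective hψ
  have hc : Fintype.card ψ.range = 4 * M := by
    rw [← Fintype.card_congr e.toEquiv, Fintype.card_prod, ZMod.card, ZMod.card]
    ring
  have h0 : ∑ x : ψ.range, x = 0 := by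
    rw [← Equiv.sum_comp e.toEquiv (fun x => x)]
    have := congrArg e (sum_zmod M)
    simpa [map_sum] using this
  have hH : HasCompleteMapping ψ.range :=
    (((hasCompleteMapping_zmod M hM).hasTriple (sum_zmod M)).congr e).hasCompleteMapping
  rw [← hc] at hexp ⊢
  exact HasTriple.of_subgroup ψ.range h0 hH hQ hexp

theorem hasTriple_main (n : ℕ) : ∀ {G : Type*} [AddCommGroup G] [Finite G] (α k : ℕ),
    Nat.card G = n → n = 2 ^ α → ¬ IsAddCyclic G → AddMonoid.exponent G = 2 ^ k →
    k + 1 ≤ α ∧ HasTriple G (if α = k + 1 then 2 ^ (k + 1) else max 4 (2 ^ k)) := by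
  induction n using Nat.strong_induction_on with
  | _ n ih =>
  intro G _ _ α k hn hα hcyc hk
  obtain ⟨g, hg⟩ := AddMonoid.exists_addOrderOf_eq_exponent
    (AddMonoid.ExponentExists.of_finite (G := G))
  rw [hk] at hg
  have hexpn : ∀ x : G, 2 ^ k • x = 0 := fun x => by
    rw [← hk]; exact AddMonoid.exponent_nsmul_eq_zero x
  have hexp : ∀ x : G, (2 ^ k : ℤ) • x = 0 := fun x => by
    have := hexpn x
    rw [← natCast_zsmul] at this
    exact_mod_cast this
  have hne : AddSubgroup.zmultiples g ≠ ⊤ := fun h =>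
    hcyc ⟨g, fun x => AddSubgroup.mem_zmultiples_iff.1 (h ▸ AddSubgroup.mem_top x)⟩
  obtain ⟨a, ha, h2⟩ := exists_involution (hn.trans hα) g hg hexp hne
  have hαk : k + 1 ≤ α := by
    have h1 : 2 ^ k < 2 ^ α := by
      rw [← hg, ← hα, ← hn, ← Nat.card_zmultiples]
      refine lt_of_le_of_ne (Nat.le_of_dvd Nat.card_pos (AddSubgroup.card_addSubgroup_dvd_card _)) fun h => hne ?_
      exact AddSubgroup.eq_top_of_card_eq _ h
    exact (Nat.pow_lt_pow_iff_right (by norm_num)).1 h1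
  refine ⟨hαk, ?_⟩
  have hk0 : k ≠ 0 := by
    rintro rfl
    have : a = 0 := by simpa using hexpn a
    exact ha (this ▸ zero_mem _)
  obtain ⟨k, rfl⟩ := Nat.exists_eq_add_one_of_ne_zero hk0
  -- Noncyclic quotients of `G` by a nontrivial subgroup have a complete mapping by induction.
  have hquot : ∀ H : AddSubgroup G, Nat.card H ≠ 1 → ¬ IsAddCyclic (G ⧸ H) →
      HasCompleteMapping (G ⧸ H) := by
    intro H hH hQ
    have hmul := H.card_eq_card_quotient_mul_card_addSubgroup
    have hpos : 0 < Nat.card (G ⧸ H) := Nat.card_pos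
    have hposH : 0 < Nat.card H := Nat.card_pos
    have hdvd : Nat.card (G ⧸ H) ∣ 2 ^ α := by
      rw [← hα, ← hn, hmul]; exact Dvd.intro _ rfl
    obtain ⟨β, -, hβ⟩ := (Nat.dvd_prime_pow Nat.prime_two).1 hdvd
    have hdvd' : AddMonoid.exponent (G ⧸ H) ∣ 2 ^ β := by
      rw [← hβ]; exact AddGroup.exponent_dvd_nat_card
    obtain ⟨κ, -, hκ⟩ := (Nat.dvd_prime_pow Nat.prime_two).1 hdvd'
    have hlt : Nat.card (G ⧸ H) < n := by
      rw [← hn, hmul]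
      exact lt_mul_of_one_lt_right hpos (by omega)
    exact (ih _ hlt β κ rfl hβ hQ hκ).2.hasCompleteMapping
  have hrange : ∀ {M : ℕ} (ψ : ZMod 2 × ZMod (2 * M) →+ G), Function.Injective ψ →
      Nat.card ψ.range = 4 * M := by
    intro M ψ hψ
    rw [← Nat.card_congr (AddMonoidHom.ofInjective hψ).toEquiv, Nat.card_prod, Nat.card_zmod,
      Nat.card_zmod]
    ring
  split_ifs with hαe
  · -- `G` itself is `ℤ/2 × ℤ/2ᵏ⁺¹`.
    obtain ⟨ψ, hψ, -, -⟩ := exists_embedding (2 ^ k) g a (by rw [hg]; ring) ha h2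
    have : NeZero (2 * 2 ^ k) := ⟨by positivity⟩
    have hbij : Function.Bijective ψ := by
      rw [Nat.bijective_iff_injective_and_card]
      refine ⟨hψ, ?_⟩
      rw [hn, hα, hαe, Nat.card_prod, Nat.card_zmod, Nat.card_zmod]
      ring
    have := ((hasCompleteMapping_zmod (2 ^ k) (by positivity)).hasTriple
      (sum_zmod (2 ^ k))).congr (AddEquiv.ofBijective ψ hbij)
    convert this using 1
    rw [Fintype.card_prod, ZMod.card, ZMod.card]
    ring
  have hα3 : k + 3 ≤ α := by omega
  rcases k with _ | k
  · -- Elementary abelian groups.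
    have hexp2 : ∀ x : G, 2 • x = 0 := by simpa using hexpn
    by_cases hα4 : α = 3
    · let _ : Module (ZMod 2) G := AddCommGroup.zmodModule hexp2
      have hfr : Module.finrank (ZMod 2) G = Module.finrank (ZMod 2) (Fin 3 → ZMod 2) := by
        have := Module.natCard_eq_pow_finrank (K := ZMod 2) (V := G)
        rw [hn, hα, hα4, Nat.card_zmod] at this
        rw [Module.finrank_fin_fun]
        exact (Nat.pow_right_injective le_rfl this).symm
      simpa using hasTriple_eight.congr (LinearEquiv.ofFinrankEq _ _ hfr.symm).toAddEquiv
    · obtain ⟨ψ, hψ, -, -⟩ := exists_embedding 1 g a (by simpa using hg) ha h2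
      have hr := hrange ψ hψ
      have hQ : HasCompleteMapping (G ⧸ ψ.range) := by
        refine hquot _ (by omega) fun hc => ?_
        obtain ⟨q, hq⟩ := hc.exists_generator
        replace hq := addOrderOf_eq_card_of_forall_mem_zmultiples hq
        have hle : Nat.card (G ⧸ ψ.range) ∣ 2 := by
          rw [← hq, addOrderOf_dvd_iff_nsmul_eq_zero]
          obtain ⟨x, rfl⟩ := QuotientAddGroup.mk_surjective q
          rw [← QuotientAddGroup.mk_nsmul, hexp2, QuotientAddGroup.mk_zero]
        have hmul := ψ.range.card_eq_card_quotient_mul_card_addSubgroup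
        have hle' := Nat.le_of_dvd (by norm_num) hle
        have : 2 ^ 4 ≤ 2 ^ α := Nat.pow_le_pow_right (by norm_num) (by omega)
        rw [hn, hα, hr] at hmul
        omega
      simpa using HasTriple.of_embedding 1 one_pos ψ hψ hQ
        (fun x => by rw [show 4 * 1 = 2 * 2 from rfl, mul_smul, hexp2])
  · have hg2 : addOrderOf ((2 : ℕ) • g) = 2 * 2 ^ k := by
      rw [addOrderOf_nsmul_of_dvd two_ne_zero (by rw [hg, pow_succ]; exact Dvd.intro_left _ rfl),
        hg, pow_succ, Nat.mul_div_cancel _ two_pos, pow_succ, mul_comm]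
    have ha2 : a ∉ AddSubgroup.zmultiples ((2 : ℕ) • g) := by
      rintro ⟨c, hc⟩
      refine ha ⟨c * 2, ?_⟩
      simp only at hc ⊢
      rw [← hc, mul_smul]; norm_cast
    obtain ⟨ψ, hψ, hψ1, hmem⟩ := exists_embedding (2 ^ k) _ a hg2 ha2 h2
    have hr := hrange ψ hψ
    have hM : 4 * 2 ^ k = 2 ^ (k + 2) := by ring
    have hmax : max 4 (2 ^ (k + 1 + 1)) = 4 * 2 ^ k := by
      rw [hM]; apply max_eq_right
      rw [← hM]; have := Nat.one_le_two_pow (n := k); omega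
    have hQ : HasCompleteMapping (G ⧸ ψ.range) := by
      have hpos := Nat.one_le_two_pow (n := k)
      refine hquot _ (by omega) fun hc => ?_
      -- Let `y` generate a cyclic quotient and `g ≡ c y`. If `c` is even, then `c y` is killed by
      -- `2ᵏ⁺¹`, but every element congruent to `g` has maximal order. If `c` is odd, then `2 g ≡ 0`
      -- contradicts that the order of the quotient is a multiple of four.
      obtain ⟨q, hq⟩ := hc.exists_generator
      obtain ⟨y, rfl⟩ := QuotientAddGroup.mk_surjective q
      obtain ⟨c, hc⟩ := hq (g : G ⧸ ψ.range)
      have hord := addOrderOf_eq_card_of_forall_mem_zmultiples hq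
      simp only at hc
      rcases Int.even_or_odd' c with ⟨d, rfl | rfl⟩
      · have hmem' : -((2 * d) • y) + g ∈ ψ.range := by
          rw [← QuotientAddGroup.eq, QuotientAddGroup.mk_zsmul]
          exact hc
        obtain ⟨u, v, huv⟩ := hmem _ hmem'
        have hy := hexp y
        have hg' := hexp g
        have hcon : (2 ^ (k + 1) : ℤ) • g = 0 := by
          have e1 : (2 ^ (k + 1) : ℤ) • g = (2 ^ (k + 1) : ℤ) • (-((2 * d) • y) + g)
              + d • ((2 ^ (k + 1 + 1) : ℤ) • y) := by
            rw [pow_succ _ (k + 1)]; module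
          have e2 : (2 ^ (k + 1) : ℤ) • (u • (2 : ℕ) • g + v • a)
              = u • ((2 ^ (k + 1 + 1) : ℤ) • g) + (v * 2 ^ k) • ((2 : ℤ) • a) := by
            rw [pow_succ _ (k + 1), pow_succ _ k]; module
          rw [e1, huv, e2, hy, hg', h2]
          simp
        have hdv := addOrderOf_dvd_iff_zsmul_eq_zero.2 hcon
        rw [hg] at hdv
        have hdv' : 2 ^ (k + 1 + 1) ∣ 2 ^ (k + 1) := by exact_mod_cast hdv
        have := (Nat.pow_dvd_pow_iff_le_right one_lt_two).1 hdv'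
        omega
      · have h2g : (2 : ℤ) • (g : G ⧸ ψ.range) = 0 := by
          rw [← QuotientAddGroup.mk_zsmul, QuotientAddGroup.eq_zero_iff]
          exact ⟨(0, 1), by rw [hψ1]; norm_cast⟩
        rw [← hc, smul_smul] at h2g
        have hdv := addOrderOf_dvd_iff_zsmul_eq_zero.2 h2g
        have hmul := ψ.range.card_eq_card_quotient_mul_card_addSubgroup
        obtain ⟨β, rfl⟩ := Nat.exists_eq_add_of_le' hα3
        have h4 : Nat.card (G ⧸ ψ.range) = 4 * 2 ^ β := by
          rw [hn, hα, hr] at hmul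
          apply Nat.eq_of_mul_eq_mul_right (show 0 < 4 * 2 ^ k by positivity)
          rw [← hmul]; ring
        rw [hord, h4] at hdv
        have : (4 : ℤ) ∣ 2 * (2 * d + 1) := dvd_trans (by push_cast; exact Dvd.intro _ rfl) hdv
        omega
    rw [hmax]
    exact HasTriple.of_embedding (2 ^ k) (by positivity) ψ hψ hQ
      (fun x => by rw [hM]; exact hexpn x)

theorem stmt7 {Γ : Type*} [AddCommGroup Γ] [Fintype Γ] (j : ℕ) (hj : 1 < j)
    (hG : InClassG Γ)
    (α : ℕ) (hα : 2 ≤ α) (hcard : Fintype.card Γ = 2 ^ α) (m : ℕ)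
    (hm : m = if AddMonoid.exponent Γ = Fintype.card Γ / 2 then 2 * AddMonoid.exponent Γ
          else max 4 (AddMonoid.exponent Γ)) :
    IsKotzigArraySet Γ j m (Fintype.card Γ / m) := by
  have hcyc : ¬ IsAddCyclic Γ := by
    intro hc
    rcases hG with h | h
    · rw [hcard] at h
      exact absurd h (by simp [Nat.even_pow]; omega)
    · classical
      have h1 := IsAddCyclic.card_nsmul_eq_zero_le (α := Γ) (n := 2) two_pos
      have hlt : Fintype.card {g : Γ // g ≠ 0 ∧ g + g = 0} <
          Fintype.card {g : Γ // 2 • g = 0} := by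
        refine Fintype.card_lt_of_injective_of_notMem
          (fun x => ⟨x.1, by rw [two_nsmul]; exact x.2.2⟩) ?_ (b := ⟨0, by simp⟩) ?_
        · intro x y hxy
          exact Subtype.ext (by simpa using hxy)
        · rintro ⟨x, hx⟩
          exact x.2.1 (congrArg Subtype.val hx)
      rw [Nat.card_eq_fintype_card] at h
      rw [Fintype.card_subtype (fun g : Γ => 2 • g = 0)] at hlt
      omega
  have hdvd : AddMonoid.exponent Γ ∣ 2 ^ α := by
    rw [← hcard, ← Nat.card_eq_fintype_card]; exact AddGroup.exponent_dvd_nat_card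
  obtain ⟨k, -, hk⟩ := (Nat.dvd_prime_pow Nat.prime_two).1 hdvd
  obtain ⟨hle, h⟩ := hasTriple_main _ α k rfl (by rw [Nat.card_eq_fintype_card, hcard]) hcyc hk
  have hiff : AddMonoid.exponent Γ = Fintype.card Γ / 2 ↔ α = k + 1 := by
    obtain ⟨β, rfl⟩ := Nat.exists_eq_add_of_le' hle
    rw [hk, hcard, show β + (k + 1) = β + k + 1 by ring, pow_succ, Nat.mul_div_cancel _ two_pos,
      Nat.pow_right_inj one_lt_two]
    omega
  have hm' : m = if α = k + 1 then 2 ^ (k + 1) else max 4 (2 ^ k) := by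
    rw [hm]
    simp only [hiff]
    simp only [hk, pow_succ, mul_comm]
  rw [← hm'] at h
  refine h.isKotzigArraySet ?_ j hj
  rw [hm']
  split_ifs <;> positivity
end
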